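/- Let G = (V,E) be a Δ-regular finite simple graph, let τ ∈ (0,1) with τ ≤ 1/Δ, let A be a set of agents with |A| < |V| partitioned into any number of types, and consider the one-versus-one jump Schelling game (1-1-JSG). Then along any sequence of improving jumps each agent jumps at most once (any agent who has performed an improving jump is content afterwards and remains content); consequently every sequence of improving jumps has length at most |A| and improving response dynamics always reach a jump-stable placement in O(|A|) moves. -/

import Mathlib

open Finset
open scoped Classical

noncomputable section

namespace Schelling

variable {V A : Type*} [Fintype V] [Fintype A] {k : ℕ}

/-- The set of neighbors of agent `a` under placement `p`. -/
def nbrs (G : SimpleGraph V) (p : A → V) (a : A) : Finset A :=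
  Finset.univ.filter fun b => G.Adj (p a) (p b)

/-- `|N⁺_p(a)|`: the number of neighbors of `a` under `p` having the same type as `a`. -/
def posCount (G : SimpleGraph V) (t : A → Fin k) (p : A → V) (a : A) : ℕ :=
  (Finset.univ.filter fun b => G.Adj (p a) (p b) ∧ t b = t a).card

/-- One-versus-all `|N⁻_p(a)|`: the number of neighbors of `a` whose type differs from `t a`. -/
def negCountAll (G : SimpleGraph V) (t : A → Fin k) (p : A → V) (a : A) : ℕ :=
  (Finset.univ.filter fun b => G.Adj (p a) (p b) ∧ t b ≠ t a).card

/-- One-versus-one `|N⁻_p(a)|`: the size of a largest set of neighbors of `a`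
of one common type different from `t a`. -/
def negCountOne (G : SimpleGraph V) (t : A → Fin k) (p : A → V) (a : A) : ℕ :=
  (Finset.univ.filter fun T : Fin k => T ≠ t a).sup fun T =>
    (Finset.univ.filter fun b => G.Adj (p a) (p b) ∧ t b = T).card

/-- The cost of agent `a` in the one-versus-all version. -/
def costAll (G : SimpleGraph V) (t : A → Fin k) (τ : ℝ) (p : A → V) (a : A) : ℝ :=
  if nbrs G p a = ∅ then τ
  else max 0 (τ - (posCount G t p a : ℝ) /
    ((posCount G t p a : ℝ) + (negCountAll G t p a : ℝ)))

/-- The cost of agent `a` in the one-versus-one version. -/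
def costOne (G : SimpleGraph V) (t : A → Fin k) (τ : ℝ) (p : A → V) (a : A) : ℝ :=
  if nbrs G p a = ∅ then τ
  else max 0 (τ - (posCount G t p a : ℝ) /
    ((posCount G t p a : ℝ) + (negCountOne G t p a : ℝ)))

/-- A swap of the (distinct) agents `a` and `b` turning placement `p` into `q`,
which strictly decreases the cost of both agents (cost function `c`). -/
def SwapMove (c : (A → V) → A → ℝ) (p q : A → V) (a b : A) : Prop :=
  a ≠ b ∧ q = p ∘ (Equiv.swap a b) ∧ c q a < c p a ∧ c q b < c p b

/-- `q` is obtained from `p` by an improving swap. -/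
def ImprovingSwap (c : (A → V) → A → ℝ) (p q : A → V) : Prop :=
  ∃ a b, SwapMove c p q a b

/-- A placement is swap-stable if it admits no improving swap. -/
def SwapStable (c : (A → V) → A → ℝ) (p : A → V) : Prop :=
  ∀ q, ¬ ImprovingSwap c p q

/-- Some finite sequence of improving swaps starting at `p₀` ends in a swap-stable placement. -/
def ReachesStableSwap (c : (A → V) → A → ℝ) (p₀ : A → V) : Prop :=
  ∃ (n : ℕ) (q : ℕ → A → V), q 0 = p₀ ∧
    (∀ i < n, ImprovingSwap c (q i) (q (i + 1))) ∧ SwapStable c (q n)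

/-- A jump of agent `a` to the node `v` (unoccupied under `p`) turning placement `p`
into `q`, which strictly decreases the cost of `a` (cost function `c`). -/
def JumpMove (c : (A → V) → A → ℝ) (p q : A → V) (a : A) (v : V) : Prop :=
  (∀ b, p b ≠ v) ∧ q = Function.update p a v ∧ c q a < c p a

/-- `q` is obtained from `p` by an improving jump. -/
def ImprovingJump (c : (A → V) → A → ℝ) (p q : A → V) : Prop :=
  ∃ a v, JumpMove c p q a v

/-- A placement is jump-stable if it admits no improving jump. -/
def JumpStable (c : (A → V) → A → ℝ) (p : A → V) : Prop :=
  ∀ q, ¬ ImprovingJump c p q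

/-- Some finite sequence of improving jumps starting at `p₀` ends in a jump-stable placement. -/
def ReachesStableJump (c : (A → V) → A → ℝ) (p₀ : A → V) : Prop :=
  ∃ (n : ℕ) (q : ℕ → A → V), q 0 = p₀ ∧
    (∀ i < n, ImprovingJump c (q i) (q (i + 1))) ∧ JumpStable c (q n)

/-- The placement cost: the number of discontent agents (one-versus-all cost). -/
def placementCost (G : SimpleGraph V) (t : A → Fin k) (τ : ℝ) (p : A → V) : ℕ :=
  (Finset.univ.filter fun a => costAll G t τ p a ≠ 0).card

/-- A graph is `Δ`-regular if every node has exactly `Δ` neighbors. -/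
def IsRegular (G : SimpleGraph V) (Δ : ℕ) : Prop :=
  ∀ v : V, (Finset.univ.filter fun u => G.Adj v u).card = Δ

/-!
If `τ Δ ≤ 1`, a single neighbor of her own type makes an agent content, because her at most `Δ`
neighbors give her a ratio of at least `1/Δ ≥ τ`; without such a neighbor her cost is `τ`. Hence an
improving jump always takes an agent with no friend to a node with one. Friendship being symmetric,
the mover was nobody's friend at her old node, so no content agent loses a friend. Being content is
therefore absorbing, and every jump strictly shrinks the set of discontent agents.
-/

section Dynamics

variable {V A : Type*}

/-- Cost functions for which contentment is absorbing: an improving jump from an injective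
placement makes its discontent mover content and leaves every content agent content. -/
structure IsContentAbsorbing (c : (A → V) → A → ℝ) : Prop where
  mover_discontent : ∀ ⦃p q a v⦄, Function.Injective p → JumpMove c p q a v → c p a ≠ 0
  mover_content : ∀ ⦃p q a v⦄, Function.Injective p → JumpMove c p q a v → c q a = 0
  content_of_content : ∀ ⦃p q a v⦄, Function.Injective p → JumpMove c p q a v →
    ∀ x, c p x = 0 → c q x = 0

/-- The first `n` steps of `seq` are improving jumps starting from an injective placement; the
`i`-th step moves agent `(mv i).1` to node `(mv i).2`. The values of `seq` beyond `n` and of `mv`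
from `n` on are irrelevant. -/
structure IsJumpSequence (c : (A → V) → A → ℝ) (n : ℕ) (seq : ℕ → A → V) (mv : ℕ → A × V) :
    Prop where
  injective_zero : Function.Injective (seq 0)
  jumpMove : ∀ i < n, JumpMove c (seq i) (seq (i + 1)) (mv i).1 (mv i).2

variable {c : (A → V) → A → ℝ} {p q : A → V} {a : A} {v : V}

theorem JumpMove.injective (h : JumpMove c p q a v) (hp : Function.Injective p) :
    Function.Injective q := by
  obtain ⟨hv, rfl, -⟩ := h
  intro x y hxy
  grind [Function.Injective, Function.update_apply]

theorem JumpStable.reachesStableJump (h : JumpStable c p) : ReachesStableJump c p :=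
  ⟨0, fun _ => p, rfl, fun _ hi => absurd hi (Nat.not_lt_zero _), h⟩

theorem ImprovingJump.reachesStableJump (h : ImprovingJump c p q) (hq : ReachesStableJump c q) :
    ReachesStableJump c p := by
  obtain ⟨n, seq, rfl, hseq, hstable⟩ := hq
  refine ⟨n + 1, fun i => Nat.casesOn i p seq, rfl, fun i hi => ?_, hstable⟩
  cases i with
  | zero => exact h
  | succ i => exact hseq i (Nat.lt_of_succ_lt_succ hi)

namespace IsContentAbsorbing

theorem discontent_ssubset (hc : IsContentAbsorbing c) (hp : Function.Injective p)
    (h : JumpMove c p q a v) : {x | c q x ≠ 0} ⊂ {x | c p x ≠ 0} :=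
  (Set.ssubset_iff_of_subset fun x => mt (hc.content_of_content hp h x)).mpr
    ⟨a, hc.mover_discontent hp h, not_not.mpr (hc.mover_content hp h)⟩

theorem reachesStableJump [Finite A] (hc : IsContentAbsorbing c) (hp : Function.Injective p) :
    ReachesStableJump c p := by
  induction hD : {x | c p x ≠ 0} using WellFoundedLT.induction generalizing p with
  | ind D ih =>
    by_cases hstable : JumpStable c p
    · exact hstable.reachesStableJump
    · obtain ⟨q, a, v, hjump⟩ : ∃ q, ImprovingJump c p q := by simpa [JumpStable] using hstable
      have hq : ReachesStableJump c q :=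
        ih _ (hD ▸ hc.discontent_ssubset hp hjump) (hjump.injective hp) rfl
      exact ImprovingJump.reachesStableJump ⟨a, v, hjump⟩ hq

end IsContentAbsorbing

namespace IsJumpSequence

variable {n : ℕ} {seq : ℕ → A → V} {mv : ℕ → A × V}

theorem injective (hs : IsJumpSequence c n seq mv) {i : ℕ} (hi : i ≤ n) :
    Function.Injective (seq i) := by
  induction i with
  | zero => exact hs.injective_zero
  | succ i ih => exact (hs.jumpMove i hi).injective (ih (Nat.le_of_succ_le hi))

theorem content_of_lt (hs : IsJumpSequence c n seq mv) (hc : IsContentAbsorbing c)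
    {i j : ℕ} (hij : i < j) (hj : j ≤ n) : c (seq j) (mv i).1 = 0 := by
  induction j, hij using Nat.le_induction with
  | base => exact hc.mover_content (hs.injective (Nat.le_of_succ_le hj)) (hs.jumpMove i hj)
  | succ j _ ih =>
    have hjn : j ≤ n := Nat.le_of_succ_le hj
    exact hc.content_of_content (hs.injective hjn) (hs.jumpMove j hj) _ (ih hjn)

theorem mover_ne_of_lt (hs : IsJumpSequence c n seq mv) (hc : IsContentAbsorbing c)
    {i j : ℕ} (hij : i < j) (hj : j < n) : (mv i).1 ≠ (mv j).1 := fun h =>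
  hc.mover_discontent (hs.injective hj.le) (hs.jumpMove j hj)
    (h ▸ hs.content_of_lt hc hij hj.le)

theorem length_le_card [Fintype A] (hs : IsJumpSequence c n seq mv) (hc : IsContentAbsorbing c) :
    n ≤ Fintype.card A := by
  have hinj : Function.Injective fun i : Fin n => (mv i).1 :=
    .of_lt_imp_ne fun _ j hij => hs.mover_ne_of_lt hc hij j.isLt
  simpa using Fintype.card_le_of_injective _ hinj

end IsJumpSequence

end Dynamics

section Cost

variable {V A : Type*} {k : ℕ}

/-- Some neighbor of `a` under `p` has the same type as `a`, that is, `N⁺_p(a) ≠ ∅`. Below the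
threshold `τ ≤ 1/Δ` this is equivalent to `a` being content. -/
def HasFriend (G : SimpleGraph V) (t : A → Fin k) (p : A → V) (a : A) : Prop :=
  ∃ b, G.Adj (p a) (p b) ∧ t b = t a

variable {G : SimpleGraph V} {t : A → Fin k} {τ : ℝ} {p : A → V} {a : A}

theorem HasFriend.update_of_not_hasFriend {x : A} (hx : HasFriend G t p x)
    (ha : ¬ HasFriend G t p a) (v : V) : HasFriend G t (Function.update p a v) x := by
  have hxa : x ≠ a := fun h => ha (h ▸ hx)
  obtain ⟨b, hxb, htb⟩ := hx
  have hba : b ≠ a := fun h => ha (h ▸ ⟨x, hxb.symm, htb.symm⟩)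
  exact ⟨b, by rwa [Function.update_of_ne hxa, Function.update_of_ne hba], htb⟩

variable [Fintype A]

theorem card_nbrs_le_degree [G.LocallyFinite] (hp : Function.Injective p) :
    (nbrs G p a).card ≤ G.degree (p a) := by
  refine Finset.card_le_card_of_injOn p (fun b hb => ?_) hp.injOn
  simpa [nbrs] using hb

theorem posCount_add_negCountAll :
    posCount G t p a + negCountAll G t p a = (nbrs G p a).card := by
  simp only [posCount, negCountAll, nbrs, ← Finset.filter_filter]
  exact Finset.card_filter_add_card_filter_not _

theorem negCountOne_le_negCountAll : negCountOne G t p a ≤ negCountAll G t p a := by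
  refine Finset.sup_le fun T hT => Finset.card_le_card ?_
  have hTa : T ≠ t a := (Finset.mem_filter.mp hT).2
  exact Finset.monotone_filter_right _ fun b _ hb => ⟨hb.1, hb.2 ▸ hTa⟩

theorem posCount_add_negCountOne_le_degree [G.LocallyFinite] (hp : Function.Injective p) :
    posCount G t p a + negCountOne G t p a ≤ G.degree (p a) :=
  calc posCount G t p a + negCountOne G t p a
      ≤ posCount G t p a + negCountAll G t p a :=
        Nat.add_le_add_left negCountOne_le_negCountAll _
    _ = (nbrs G p a).card := posCount_add_negCountAll
    _ ≤ G.degree (p a) := card_nbrs_le_degree hp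

theorem posCount_pos_iff : 0 < posCount G t p a ↔ HasFriend G t p a := by
  simp [posCount, HasFriend, Finset.card_pos, Finset.filter_nonempty_iff]

theorem HasFriend.nbrs_ne_empty (h : HasFriend G t p a) : nbrs G p a ≠ ∅ := by
  obtain ⟨b, hab, -⟩ := h
  exact Finset.ne_empty_of_mem (Finset.mem_filter.mpr ⟨Finset.mem_univ b, hab⟩)

theorem HasFriend.costOne_eq_zero [G.LocallyFinite] (h : HasFriend G t p a)
    (hp : Function.Injective p) (hτ0 : 0 ≤ τ) (hτ : τ * G.degree (p a) ≤ 1) :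
    costOne G t τ p a = 0 := by
  rw [costOne, if_neg h.nbrs_ne_empty, max_eq_left_iff, sub_nonpos]
  have hpos : (1 : ℝ) ≤ posCount G t p a := by exact_mod_cast posCount_pos_iff.mpr h
  have hle : (posCount G t p a + negCountOne G t p a : ℝ) ≤ G.degree (p a) := by
    exact_mod_cast posCount_add_negCountOne_le_degree hp
  rw [le_div_iff₀ (by positivity)]
  calc τ * (posCount G t p a + negCountOne G t p a) ≤ τ * G.degree (p a) := by gcongr
    _ ≤ 1 := hτ
    _ ≤ posCount G t p a := hpos

theorem costOne_eq_of_not_hasFriend (h : ¬ HasFriend G t p a) (hτ0 : 0 ≤ τ) :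
    costOne G t τ p a = τ := by
  have hpos : posCount G t p a = 0 := by rwa [← posCount_pos_iff, Nat.pos_iff_ne_zero, not_not] at h
  simp [costOne, hpos, hτ0]

theorem costOne_eq_ite [G.LocallyFinite] (hp : Function.Injective p) (hτ0 : 0 ≤ τ)
    (hτ : τ * G.degree (p a) ≤ 1) :
    costOne G t τ p a = if HasFriend G t p a then 0 else τ := by
  split_ifs with h
  · exact h.costOne_eq_zero hp hτ0 hτ
  · exact costOne_eq_of_not_hasFriend h hτ0

theorem costOne_eq_zero_iff [G.LocallyFinite] (hp : Function.Injective p) (hτ0 : 0 < τ)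
    (hτ : τ * G.degree (p a) ≤ 1) : costOne G t τ p a = 0 ↔ HasFriend G t p a := by
  simp [costOne_eq_ite hp hτ0.le hτ, hτ0.ne']

theorem JumpMove.not_hasFriend_and_hasFriend [G.LocallyFinite] {q : A → V} {v : V}
    (h : JumpMove (costOne G t τ) p q a v) (hp : Function.Injective p) (hτ0 : 0 ≤ τ)
    (hτ : ∀ v, τ * G.degree v ≤ 1) : ¬ HasFriend G t p a ∧ HasFriend G t q a := by
  have hlt : costOne G t τ q a < costOne G t τ p a := h.2.2
  rw [costOne_eq_ite hp hτ0 (hτ _), costOne_eq_ite (h.injective hp) hτ0 (hτ _)] at hlt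
  split_ifs at hlt with hq hp' hp'
  · exact absurd hlt (lt_irrefl _)
  · exact ⟨hp', hq⟩
  · exact absurd hlt hτ0.not_gt
  · exact absurd hlt (lt_irrefl _)

theorem isContentAbsorbing_costOne [G.LocallyFinite] (hτ0 : 0 < τ)
    (hτ : ∀ v, τ * G.degree v ≤ 1) : IsContentAbsorbing (costOne G t τ) where
  mover_discontent _ _ _ _ hp h := by
    rw [ne_eq, costOne_eq_zero_iff hp hτ0 (hτ _)]
    exact (h.not_hasFriend_and_hasFriend hp hτ0.le hτ).1
  mover_content _ _ _ _ hp h := by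
    rw [costOne_eq_zero_iff (h.injective hp) hτ0 (hτ _)]
    exact (h.not_hasFriend_and_hasFriend hp hτ0.le hτ).2
  content_of_content _ _ a v hp h x hx := by
    rw [costOne_eq_zero_iff (h.injective hp) hτ0 (hτ _), h.2.1]
    rw [costOne_eq_zero_iff hp hτ0 (hτ _)] at hx
    exact hx.update_of_not_hasFriend (h.not_hasFriend_and_hasFriend hp hτ0.le hτ).1 v

end Cost

theorem IsRegular.degree_eq {V : Type*} [Fintype V] {G : SimpleGraph V} {Δ : ℕ}
    (hreg : IsRegular G Δ) (v : V) : G.degree v = Δ := by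
  rw [← hreg v, ← G.card_neighborFinset_eq_degree, G.neighborFinset_eq_filter]

theorem statement9_general {V A : Type*} [Fintype A] {k : ℕ}
    (G : SimpleGraph V) [G.LocallyFinite] (t : A → Fin k)
    (τ : ℝ) (hτ0 : 0 < τ) (hτ : ∀ v, τ * G.degree v ≤ 1) :
    (∀ (n : ℕ) (seq : ℕ → A → V) (mv : ℕ → A × V),
        Function.Injective (seq 0) →
        (∀ i < n, JumpMove (costOne G t τ) (seq i) (seq (i + 1)) (mv i).1 (mv i).2) →
        (∀ i, i < n → ∀ j, i < j → j ≤ n → costOne G t τ (seq j) (mv i).1 = 0) ∧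
        (∀ i j, i < j → j < n → (mv i).1 ≠ (mv j).1) ∧
        n ≤ Fintype.card A) ∧
    (∀ p₀ : A → V, Function.Injective p₀ → ReachesStableJump (costOne G t τ) p₀) := by
  have hc : IsContentAbsorbing (costOne G t τ) := isContentAbsorbing_costOne hτ0 hτ
  refine ⟨fun n seq mv h0 hmv => ?_, fun p₀ hp₀ => hc.reachesStableJump hp₀⟩
  have hs : IsJumpSequence (costOne G t τ) n seq mv := ⟨h0, hmv⟩
  exact ⟨fun _ _ _ hij hj => hs.content_of_lt hc hij hj,
    fun _ _ hij hj => hs.mover_ne_of_lt hc hij hj, hs.length_le_card hc⟩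

/-- In the `1`-`1`-JSG on a `Δ`-regular graph with `τ ≤ 1/Δ`: along any sequence of
improving jumps, each jumping agent is content in every later placement, each agent jumps
at most once, hence every such sequence has length at most `|A|`, and IRD always reach a
jump-stable placement. -/
theorem statement9 {V A : Type*} [Fintype V] [Fintype A] {k : ℕ}
    (G : SimpleGraph V) (Δ : ℕ) (hreg : IsRegular G Δ)
    (t : A → Fin k) (ht : Function.Surjective t)
    (hcard : Fintype.card A < Fintype.card V)
    (τ : ℝ) (hτ0 : 0 < τ) (hτ1 : τ < 1) (hτΔ : τ ≤ 1 / (Δ : ℝ)) :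
    (∀ (n : ℕ) (seq : ℕ → A → V) (mv : ℕ → A × V),
        Function.Injective (seq 0) →
        (∀ i < n, JumpMove (costOne G t τ) (seq i) (seq (i + 1)) (mv i).1 (mv i).2) →
        (∀ i, i < n → ∀ j, i < j → j ≤ n → costOne G t τ (seq j) (mv i).1 = 0) ∧
        (∀ i j, i < j → j < n → (mv i).1 ≠ (mv j).1) ∧
        n ≤ Fintype.card A) ∧
    (∀ p₀ : A → V, Function.Injective p₀ → ReachesStableJump (costOne G t τ) p₀) := by
  have hτ : τ * Δ ≤ 1 := mul_le_of_le_div₀ zero_le_one Δ.cast_nonneg hτΔ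
  exact statement9_general G t τ hτ0 fun v => (hreg.degree_eq v).symm ▸ hτ

end Schelling
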